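/- arXiv:2103.09756 — 2 statements merged into one kernel-verified Lean document; each statement's English description precedes it below -/
import Mathlib

section
/- In the REPS setting, suppose the minimal-visitation assumption holds with constant ρ > 0 and that |S| ≥ 2. Let ṽ : S → ℝ be arbitrary and let λ̃ = λ^ṽ be its candidate primal solution. Suppose the vector g ∈ ℝ^S defined by g_s = (1−γ)μ_s + γ Σ_{s',a} P(s|s',a) λ̃_{s',a} − Σ_a λ̃_{s,a} (which equals the gradient ∇J_D(ṽ)) satisfies Σ_s |g_s| ≤ ε. Define the policy π̃(a|s) = λ̃_{s,a}/Σ_{a'} λ̃_{s,a'}, and let λ' ∈ Λ be any feasible point whose conditional policy is π̃, i.e. λ'_{s,a} = (Σ_{a'} λ'_{s,a'})·π̃(a|s) for all (s,a). Let λ*_η be a maximizer of J_P over Λ. Then J_P(λ') ≥ J_P(λ*_η) − ε·((1+c)/(1−γ) + max_s |ṽ_s|), where c = (1 + log(1/(ρ³β)))/η. -/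
/-!
Write `d s = ∑ a, l s a` for the state marginal of `l`, let `lt` be the candidate primal solution
of `vt`, and let `g` be the dual gradient at `vt`. The value `JP lt` serves as an intermediary.

* `lt` is optimal for the primal problem with flow constraints perturbed by `g`: the identity
  `log (lt / q) = η A - log Z` together with nonnegativity of relative entropy gives
  `JP l ≤ JP lt + ⟨g, vt⟩` for feasible `l` (`JP_le_JP_cand`). This accounts for `ε * max |vt|`.
* `lam'` and `lt` share the conditional policy `π`, so their state marginals solve the same flow
  equation up to `g`. Since a policy's transition kernel is an `ℓ¹` contraction,
  `∑ |d' - dt| ≤ ε / (1 - γ)` (`marginal_l1_le`).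
* For two measures with the same policy, the entropy difference splits as
  `∑ (d' log d' - dt log dt) + ∑ (d' - dt) h`, where `h s = ∑ a, π log (π / q)` lies in
  `[0, log (1 / β)]`. Convexity of `x log x` and `d' ≥ ρ` bound the first sum by
  `log (1 / ρ) * ∑ |d' - dt|` (`entropy_diff_le`). With rewards in `[0, 1]` this gives
  `JP lt - JP lam' ≤ (1 + (log (1 / ρ) + log (1 / β)) / η) * ε / (1 - γ)`.
-/

/-- Advantage function `A^v_{s,a} = r_{s,a} - v_s + γ Σ_{s'} P(s'|s,a) v_{s'}`
(here `P s a s' = P(s'|s,a)`). -/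
noncomputable def Adv {S A : Type*} [Fintype S] (P : S → A → S → ℝ) (r : S → A → ℝ)
    (γ : ℝ) (v : S → ℝ) (s : S) (a : A) : ℝ :=
  r s a - v s + γ * ∑ s', P s a s' * v s'

/-- The feasible set `Λ` of normalized discounted state-action visitation measures. -/
def Feasible {S A : Type*} [Fintype S] [Fintype A] (P : S → A → S → ℝ) (μ : S → ℝ)
    (γ : ℝ) : Set (S → A → ℝ) :=
  {l | (∀ s a, 0 ≤ l s a) ∧ (∑ s, ∑ a, l s a = 1) ∧
    ∀ s, ∑ a, l s a = (1 - γ) * μ s + γ * ∑ s', ∑ a, P s' a s * l s' a}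

/-- The KL-regularized primal objective
`J_P(λ) = Σ λ_{s,a} r_{s,a} − (1/η) Σ λ_{s,a}(log(λ_{s,a}/q_{s,a}) − 1)`. -/
noncomputable def JP {S A : Type*} [Fintype S] [Fintype A] (r q : S → A → ℝ) (η : ℝ)
    (l : S → A → ℝ) : ℝ :=
  ∑ s, ∑ a, l s a * r s a - (1 / η) * ∑ s, ∑ a, l s a * (Real.log (l s a / q s a) - 1)

/-- The candidate primal solution `λ^v_{s,a} = exp(η A^v_{s,a}) q_{s,a} / Z(v)`. -/
noncomputable def lamCand {S A : Type*} [Fintype S] [Fintype A] (P : S → A → S → ℝ)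
    (r : S → A → ℝ) (γ : ℝ) (q : S → A → ℝ) (η : ℝ) (v : S → ℝ) (s : S) (a : A) : ℝ :=
  Real.exp (η * Adv P r γ v s a) * q s a /
    ∑ s', ∑ a', Real.exp (η * Adv P r γ v s' a') * q s' a'

/-- The tangent-line inequality for `x log x`, in the form `y log (y / c)` versus
`y log (x / c)`; the value `y = 0` is allowed. -/
lemma mul_log_div_ge {x y c : ℝ} (hx : 0 < x) (hy : 0 ≤ y) (hc : 0 < c) :
    y * Real.log (x / c) + y - x ≤ y * Real.log (y / c) := by
  rcases hy.eq_or_lt with rfl | hy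
  · simp [hx.le]
  · rw [Real.log_div hx.ne' hc.ne', Real.log_div hy.ne' hc.ne']
    have h := Real.log_le_sub_one_of_pos (div_pos hx hy)
    rw [Real.log_div hx.ne' hy.ne'] at h
    have h2 : y * (Real.log x - Real.log y) ≤ y * (x / y - 1) :=
      mul_le_mul_of_nonneg_left h hy.le
    have h3 : y * (x / y - 1) = x - y := by field_simp
    linarith

/-- Duality between the flow operator on measures and the Bellman operator on values. -/
lemma sum_flow_dual {S A : Type*} [Fintype S] [Fintype A] (P : S → A → S → ℝ)
    (r : S → A → ℝ) (γ : ℝ) (v : S → ℝ) (l : S → A → ℝ) :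
    ∑ s, ∑ a, l s a * (r s a - Adv P r γ v s a)
      = ∑ s, v s * (∑ a, l s a - γ * ∑ s', ∑ a, P s' a s * l s' a) := by
  have h1 : ∀ s a, l s a * (r s a - Adv P r γ v s a)
      = v s * l s a - ∑ s', γ * (v s' * (P s a s' * l s a)) := by
    intro s a
    have h : ∑ s', γ * (v s' * (P s a s' * l s a)) = γ * (∑ s', P s a s' * v s') * l s a := by
      rw [Finset.mul_sum, Finset.sum_mul]
      exact Finset.sum_congr rfl fun _ _ => by ring
    rw [h]
    unfold Adv
    ring
  have h2 : ∀ s, v s * (∑ a, l s a - γ * ∑ s', ∑ a, P s' a s * l s' a)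
      = ∑ a, v s * l s a - ∑ s', ∑ a, γ * (v s * (P s' a s * l s' a)) := by
    intro s
    simp only [mul_sub, Finset.mul_sum]
    congr 1
    exact Finset.sum_congr rfl fun _ _ => Finset.sum_congr rfl fun _ _ => by ring
  simp only [h1, h2, Finset.sum_sub_distrib]
  congr 1
  -- Both sides are the same triple sum; rotate the order of summation.
  conv_rhs => rw [Finset.sum_comm]
  exact Finset.sum_congr rfl fun _ _ => Finset.sum_comm

section Candidate

variable {S A : Type*} [Fintype S] [Fintype A] [Nonempty S] [Nonempty A]
  (P : S → A → S → ℝ) (r : S → A → ℝ) (γ : ℝ) (q : S → A → ℝ) (η : ℝ) (v : S → ℝ)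

lemma partition_pos (hq : ∀ s a, 0 < q s a) :
    0 < ∑ s', ∑ a', Real.exp (η * Adv P r γ v s' a') * q s' a' :=
  Finset.sum_pos (fun s _ => Finset.sum_pos (fun a _ => mul_pos (Real.exp_pos _) (hq s a))
    Finset.univ_nonempty) Finset.univ_nonempty

lemma lamCand_pos (hq : ∀ s a, 0 < q s a) (s : S) (a : A) :
    0 < lamCand P r γ q η v s a :=
  div_pos (mul_pos (Real.exp_pos _) (hq s a)) (partition_pos P r γ q η v hq)

lemma lamCand_sum (hq : ∀ s a, 0 < q s a) :
    ∑ s, ∑ a, lamCand P r γ q η v s a = 1 := by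
  unfold lamCand
  simp only [← Finset.sum_div]
  exact div_self (partition_pos P r γ q η v hq).ne'

lemma log_lamCand_div (hq : ∀ s a, 0 < q s a) (s : S) (a : A) :
    Real.log (lamCand P r γ q η v s a / q s a) = η * Adv P r γ v s a
      - Real.log (∑ s', ∑ a', Real.exp (η * Adv P r γ v s' a') * q s' a') := by
  have hZ := partition_pos P r γ q η v hq
  have h : lamCand P r γ q η v s a / q s a = Real.exp (η * Adv P r γ v s a)
      / ∑ s', ∑ a', Real.exp (η * Adv P r γ v s' a') * q s' a' := by
    have := (hq s a).ne'
    unfold lamCand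
    field_simp
  rw [h, Real.log_div (Real.exp_pos _).ne' hZ.ne', Real.log_exp]

/-- The candidate solution is optimal for the flow constraints perturbed by the dual gradient:
its regularized value, corrected by the pairing of the gradient with `v`, dominates that of every
feasible point. -/
lemma JP_le_JP_cand (hq : ∀ s a, 0 < q s a) (hη : 0 < η) (μ : S → ℝ)
    (l : S → A → ℝ) (hl : l ∈ Feasible P μ γ) :
    JP r q η l ≤ JP r q η (lamCand P r γ q η v)
      + ∑ s, v s * ((1 - γ) * μ s
        + γ * (∑ s', ∑ a, P s' a s * lamCand P r γ q η v s' a)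
        - ∑ a, lamCand P r γ q η v s a) := by
  obtain ⟨hl0, hl1, hlf⟩ := hl
  set lt := lamCand P r γ q η v with hlt
  set Z := ∑ s', ∑ a', Real.exp (η * Adv P r γ v s' a') * q s' a' with hZ
  have hlog : ∀ s a, Real.log (lt s a / q s a) = η * Adv P r γ v s a - Real.log Z :=
    log_lamCand_div P r γ q η v hq
  have hpos : ∀ s a, 0 < lt s a := lamCand_pos P r γ q η v hq
  have hsum : ∑ s, ∑ a, lt s a = 1 := lamCand_sum P r γ q η v hq
  -- At the candidate itself the entropy term is affine in the advantage.
  have e1 : JP r q η lt = ∑ s, ∑ a, lt s a * (r s a - Adv P r γ v s a)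
      + (Real.log Z + 1) / η := by
    have : JP r q η lt = ∑ s, ∑ a, (lt s a * (r s a - Adv P r γ v s a)
        + lt s a * ((Real.log Z + 1) / η)) := by
      unfold JP
      simp only [Finset.mul_sum, ← Finset.sum_sub_distrib]
      refine Finset.sum_congr rfl fun s _ => Finset.sum_congr rfl fun a _ => ?_
      rw [hlog]
      field_simp
      ring
    rw [this]
    simp only [Finset.sum_add_distrib, ← Finset.sum_mul]
    rw [hsum, one_mul]
  have e2 : JP r q η l ≤ ∑ s, ∑ a, l s a * (r s a - Adv P r γ v s a)
      + (Real.log Z + 1) / η := by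
    have : JP r q η l ≤ ∑ s, ∑ a, (l s a * (r s a - Adv P r γ v s a)
        + l s a * (Real.log Z / η) + lt s a * (1 / η)) := by
      unfold JP
      simp only [Finset.mul_sum, ← Finset.sum_sub_distrib]
      refine Finset.sum_le_sum fun s _ => Finset.sum_le_sum fun a _ => ?_
      have h := mul_log_div_ge (hpos s a) (hl0 s a) (hq s a)
      rw [hlog] at h
      have h' := mul_le_mul_of_nonneg_left h (one_div_pos.mpr hη).le
      have h'' : 1 / η * (l s a * (η * Adv P r γ v s a - Real.log Z) + l s a - lt s a)
          = l s a * Adv P r γ v s a - l s a * (Real.log Z / η) + 1 / η * l s a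
            - lt s a * (1 / η) := by
        field_simp
      rw [h''] at h'
      linarith
    refine this.trans (le_of_eq ?_)
    simp only [Finset.sum_add_distrib, ← Finset.sum_mul]
    rw [hsum, hl1]
    ring
  rw [e1]
  refine e2.trans (le_of_eq ?_)
  rw [sum_flow_dual, sum_flow_dual, add_right_comm, ← Finset.sum_add_distrib]
  congr 1
  refine Finset.sum_congr rfl fun s _ => ?_
  rw [hlf s]
  ring

end Candidate

section SharedPolicy

variable {S A : Type*} [Fintype S] [Fintype A]

/-- If `x` is a fixed point, up to `g`, of the `γ`-discounted flow under the policy `π`, then its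
`ℓ¹` norm is at most that of `g` times the effective horizon. -/
lemma marginal_l1_le (P : S → A → S → ℝ) (hP0 : ∀ s a s', 0 ≤ P s a s')
    (hP1 : ∀ s a, ∑ s', P s a s' = 1) (γ : ℝ) (hγ : 0 < γ ∧ γ < 1)
    (p : S → A → ℝ) (hp0 : ∀ s a, 0 ≤ p s a) (hp1 : ∀ s, ∑ a, p s a = 1)
    (x g : S → ℝ) (hx : ∀ s, x s = γ * ∑ s', ∑ a, P s' a s * (x s' * p s' a) + g s)
    (ε : ℝ) (hg : ∑ s, |g s| ≤ ε) :
    ∑ s, |x s| ≤ ε / (1 - γ) := by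
  have hb : ∀ s, |x s| ≤ γ * ∑ s', ∑ a, P s' a s * (|x s'| * p s' a) + |g s| := by
    intro s
    conv_lhs => rw [hx s]
    refine (abs_add_le _ _).trans ?_
    rw [abs_mul, abs_of_pos hγ.1]
    gcongr
    · exact hγ.1.le
    refine (Finset.abs_sum_le_sum_abs _ _).trans (Finset.sum_le_sum fun s' _ => ?_)
    refine (Finset.abs_sum_le_sum_abs _ _).trans (Finset.sum_le_sum fun a _ => ?_)
    rw [abs_mul, abs_mul, abs_of_nonneg (hP0 _ _ _), abs_of_nonneg (hp0 _ _)]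
  have hk : ∑ s, ∑ s', ∑ a, P s' a s * (|x s'| * p s' a) = ∑ s, |x s| := by
    rw [Finset.sum_comm]
    refine Finset.sum_congr rfl fun s' _ => ?_
    rw [Finset.sum_comm]
    simp only [← Finset.sum_mul, hP1, one_mul, ← Finset.mul_sum, hp1, mul_one]
  have h := Finset.sum_le_sum fun s (_ : s ∈ Finset.univ) => hb s
  rw [Finset.sum_add_distrib, ← Finset.mul_sum, hk] at h
  rw [le_div_iff₀ (by linarith [hγ.2])]
  linarith

/-- The relative entropy of a policy with respect to the unnormalized slice `q` is nonnegative
because `q` has mass at most `1`, and at most `log (1 / β)` because `q ≥ β`. -/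
lemma policy_entropy_abs_le (p q : A → ℝ) (β : ℝ) (hβ : 0 < β) (hp : ∀ a, 0 < p a)
    (hp1 : ∑ a, p a = 1) (hq : ∀ a, β ≤ q a) (hq1 : ∑ a, q a ≤ 1) :
    |∑ a, p a * Real.log (p a / q a)| ≤ -Real.log β := by
  have hq0 : ∀ a, 0 < q a := fun a => hβ.trans_le (hq a)
  have hlow : 0 ≤ ∑ a, p a * Real.log (p a / q a) := by
    have h : ∑ a, (p a - q a) ≤ ∑ a, p a * Real.log (p a / q a) :=
      Finset.sum_le_sum fun a _ => by
        have h := mul_log_div_ge (hq0 a) (hp a).le (hq0 a)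
        rw [div_self (hq0 a).ne', Real.log_one] at h
        linarith
    rw [Finset.sum_sub_distrib, hp1] at h
    linarith
  rw [abs_of_nonneg hlow]
  have h : ∑ a, p a * Real.log (p a / q a) ≤ ∑ a, p a * (-Real.log β) := by
    refine Finset.sum_le_sum fun a _ => mul_le_mul_of_nonneg_left ?_ (hp a).le
    rw [Real.log_div (hp a).ne' (hq0 a).ne']
    have h1 : p a ≤ 1 := hp1 ▸ Finset.single_le_sum (fun i _ => (hp i).le) (Finset.mem_univ a)
    have := Real.log_nonpos (hp a).le h1
    have := Real.log_le_log hβ (hq a)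
    linarith
  rwa [← Finset.sum_mul, hp1, one_mul] at h

/-- Entropy difference at one state of two measures with the same conditional policy `p` and
state masses `d`, `e`. Convexity of `x log x` at `d` leaves the additive term `d - e`, which
disappears after summing over states. -/
lemma entropy_diff_le (p q : A → ℝ) (β ρ d e : ℝ) (hβ : 0 < β) (hρ : 0 < ρ)
    (hp : ∀ a, 0 < p a) (hp1 : ∑ a, p a = 1) (hq : ∀ a, β ≤ q a) (hq1 : ∑ a, q a ≤ 1)
    (hd : ρ ≤ d) (hd1 : d ≤ 1) (he : 0 < e) :
    ∑ a, (d * p a) * Real.log (d * p a / q a) - ∑ a, (e * p a) * Real.log (e * p a / q a)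
      ≤ |d - e| * (-Real.log ρ - Real.log β) + (d - e) := by
  have hq0 : ∀ a, 0 < q a := fun a => hβ.trans_le (hq a)
  have hd0 : 0 < d := hρ.trans_le hd
  have hsplit : ∀ t : ℝ, 0 < t → ∑ a, (t * p a) * Real.log (t * p a / q a)
      = t * Real.log t + t * ∑ a, p a * Real.log (p a / q a) := by
    intro t ht
    have : ∀ a, (t * p a) * Real.log (t * p a / q a)
        = p a * (t * Real.log t) + t * (p a * Real.log (p a / q a)) := by
      intro a
      rw [mul_div_assoc, Real.log_mul ht.ne' (div_pos (hp a) (hq0 a)).ne']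
      ring
    simp only [this, Finset.sum_add_distrib, ← Finset.sum_mul, ← Finset.mul_sum, hp1, one_mul]
  rw [hsplit d hd0, hsplit e he]
  have hh := policy_entropy_abs_le p q β hβ hp hp1 hq hq1
  set h := ∑ a, p a * Real.log (p a / q a)
  have h1 : e * Real.log d + e - d ≤ e * Real.log e := by
    simpa using mul_log_div_ge hd0 he.le one_pos
  have h2 : |Real.log d| ≤ -Real.log ρ := by
    rw [abs_of_nonpos (Real.log_nonpos hd0.le hd1)]
    linarith [Real.log_le_log hρ hd]
  have h3 : (d - e) * (Real.log d + h) ≤ |d - e| * (-Real.log ρ - Real.log β) := by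
    refine (le_abs_self _).trans ?_
    rw [abs_mul]
    refine mul_le_mul_of_nonneg_left ?_ (abs_nonneg _)
    linarith [abs_add_le (Real.log d) h]
  linarith

end SharedPolicy

/-- a dual candidate `ṽ` with small gradient (in ℓ1 norm) yields a policy
whose induced feasible visitation distribution has nearly optimal regularized primal value. -/
theorem stmt_5 {S A : Type*} [Fintype S] [Fintype A] [Nonempty S] [Nonempty A]
    (P : S → A → S → ℝ) (hP0 : ∀ s a s', 0 ≤ P s a s') (hP1 : ∀ s a, ∑ s', P s a s' = 1)
    (r : S → A → ℝ) (hr : ∀ s a, 0 ≤ r s a ∧ r s a ≤ 1)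
    (μ : S → ℝ) (hμ0 : ∀ s, 0 ≤ μ s) (hμ1 : ∑ s, μ s = 1)
    (γ : ℝ) (hγ : 0 < γ ∧ γ < 1)
    (β : ℝ) (hβ : 0 < β)
    (q : S → A → ℝ) (hq : ∀ s a, β ≤ q s a) (hq1 : ∑ s, ∑ a, q s a = 1)
    (η : ℝ) (hη : 0 < η)
    (ρ : ℝ) (hρ : 0 < ρ)
    (hvisit : ∀ l ∈ Feasible P μ γ, ∀ s, ρ ≤ ∑ a, l s a)
    (hS : 2 ≤ Fintype.card S)
    (vt : S → ℝ) (ε : ℝ)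
    (hgrad : ∑ s, |(1 - γ) * μ s + γ * (∑ s', ∑ a, P s' a s * lamCand P r γ q η vt s' a)
      - ∑ a, lamCand P r γ q η vt s a| ≤ ε)
    (lam' : S → A → ℝ) (hlam'_mem : lam' ∈ Feasible P μ γ)
    (hlam'_pol : ∀ s a, lam' s a = (∑ a', lam' s a') *
      (lamCand P r γ q η vt s a / ∑ a', lamCand P r γ q η vt s a'))
    (lamstar : S → A → ℝ) (hstar_mem : lamstar ∈ Feasible P μ γ)
    (hstar_max : ∀ l ∈ Feasible P μ γ, JP r q η l ≤ JP r q η lamstar) :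
    JP r q η lamstar - ε * ((1 + (1 + Real.log (1 / (ρ ^ 3 * β))) / η) / (1 - γ)
      + ⨆ s, |vt s|) ≤ JP r q η lam' := by
  obtain ⟨hl0, hl1, hlf⟩ := id hlam'_mem
  have hq0 : ∀ s a, 0 < q s a := fun s a => hβ.trans_le (hq s a)
  have hstar := JP_le_JP_cand P r γ q η vt hq0 hη μ lamstar hstar_mem
  have hpos : ∀ s a, 0 < lamCand P r γ q η vt s a := lamCand_pos P r γ q η vt hq0
  have hsum : ∑ s, ∑ a, lamCand P r γ q η vt s a = 1 := lamCand_sum P r γ q η vt hq0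
  generalize lamCand P r γ q η vt = lt at *
  set g : S → ℝ := fun s => (1 - γ) * μ s + γ * (∑ s', ∑ a, P s' a s * lt s' a)
      - ∑ a, lt s a with hg
  have hgrad' : ∑ s, |g s| ≤ ε := hgrad
  have hdt : ∀ s, 0 < ∑ a, lt s a := fun s =>
    Finset.sum_pos (fun a _ => hpos s a) Finset.univ_nonempty
  set p : S → A → ℝ := fun s a => lt s a / ∑ a', lt s a' with hp
  have hp0 : ∀ s a, 0 < p s a := fun s a => div_pos (hpos s a) (hdt s)
  have hp1 : ∀ s, ∑ a, p s a = 1 := by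
    intro s
    simp only [hp, ← Finset.sum_div]
    exact div_self (hdt s).ne'
  set d : S → ℝ := fun s => ∑ a, lam' s a with hd
  set e : S → ℝ := fun s => ∑ a, lt s a with he
  have hlam : ∀ s a, lam' s a = d s * p s a := hlam'_pol
  have hltp : ∀ s a, lt s a = e s * p s a := fun s a =>
    (mul_div_cancel₀ (lt s a) (hdt s).ne').symm
  have hdρ : ∀ s, ρ ≤ d s := hvisit lam' hlam'_mem
  have hd1 : ∀ s, d s ≤ 1 := fun s =>
    hl1 ▸ Finset.single_le_sum (f := d)
      (fun i _ => Finset.sum_nonneg fun a _ => hl0 i a) (Finset.mem_univ s)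
  have hqs : ∀ s, ∑ a, q s a ≤ 1 := fun s =>
    hq1 ▸ Finset.single_le_sum (f := fun s => ∑ a, q s a)
      (fun i _ => Finset.sum_nonneg fun a _ => (hq0 i a).le) (Finset.mem_univ s)
  have hL1 : ∑ s, |d s - e s| ≤ ε / (1 - γ) := by
    refine marginal_l1_le P hP0 hP1 γ hγ p (fun s a => (hp0 s a).le) hp1 _ g ?_ ε hgrad'
    intro s
    have h1 : ∑ s', ∑ a, P s' a s * ((d s' - e s') * p s' a)
        = ∑ s', ∑ a, P s' a s * lam' s' a - ∑ s', ∑ a, P s' a s * lt s' a := by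
      simp only [← Finset.sum_sub_distrib]
      refine Finset.sum_congr rfl fun s' _ => Finset.sum_congr rfl fun a _ => ?_
      rw [hlam, hltp]
      ring
    have h2 : d s = (1 - γ) * μ s + γ * ∑ s', ∑ a, P s' a s * lam' s' a := hlf s
    rw [h1, h2]
    simp only [hg, he]
    ring
  have hrew : ∑ s, ∑ a, lt s a * r s a - ∑ s, ∑ a, lam' s a * r s a ≤ ∑ s, |d s - e s| := by
    rw [← Finset.sum_sub_distrib]
    refine Finset.sum_le_sum fun s _ => ?_
    rw [← Finset.sum_sub_distrib]
    calc ∑ a, (lt s a * r s a - lam' s a * r s a)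
        ≤ ∑ a, |d s - e s| * p s a := by
          refine Finset.sum_le_sum fun a _ => ?_
          rw [hlam, hltp]
          have h1 : (e s - d s) * r s a ≤ |d s - e s| := by
            rw [abs_sub_comm]
            nlinarith [hr s a, le_abs_self (e s - d s), abs_nonneg (e s - d s)]
          nlinarith [mul_le_mul_of_nonneg_right h1 (hp0 s a).le]
      _ = |d s - e s| := by rw [← Finset.mul_sum, hp1, mul_one]
  have hent : ∑ s, ∑ a, lam' s a * Real.log (lam' s a / q s a)
      - ∑ s, ∑ a, lt s a * Real.log (lt s a / q s a)
      ≤ (∑ s, |d s - e s|) * (-Real.log ρ - Real.log β) := by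
    have h : ∑ s, ∑ a, lam' s a * Real.log (lam' s a / q s a)
        - ∑ s, ∑ a, lt s a * Real.log (lt s a / q s a)
        ≤ ∑ s, (|d s - e s| * (-Real.log ρ - Real.log β) + (d s - e s)) := by
      rw [← Finset.sum_sub_distrib]
      refine Finset.sum_le_sum fun s _ => ?_
      simp only [hlam s, hltp s]
      exact entropy_diff_le (p s) (q s) β ρ (d s) (e s) hβ hρ (hp0 s) (hp1 s) (hq s) (hqs s)
        (hdρ s) (hd1 s) (hdt s)
    rw [Finset.sum_add_distrib, ← Finset.sum_mul, Finset.sum_sub_distrib] at h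
    have hds : ∑ s, d s = 1 := hl1
    have hes : ∑ s, e s = 1 := hsum
    linarith
  have hJP : ∀ l : S → A → ℝ, ∑ s, ∑ a, l s a = 1 → JP r q η l = ∑ s, ∑ a, l s a * r s a
      - (1 / η) * (∑ s, ∑ a, l s a * Real.log (l s a / q s a) - 1) := by
    intro l hl
    unfold JP
    simp only [mul_sub, mul_one, Finset.sum_sub_distrib, hl]
  have hpair : ∑ s, vt s * g s ≤ ε * ⨆ s, |vt s| := by
    have hM : ∀ s, |vt s| ≤ ⨆ s, |vt s| := fun s =>
      le_ciSup (f := fun s => |vt s|) (Set.finite_range _).bddAbove s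
    have hM0 : 0 ≤ ⨆ s, |vt s| := Real.iSup_nonneg fun s => abs_nonneg _
    calc ∑ s, vt s * g s ≤ ∑ s, (⨆ s, |vt s|) * |g s| := by
          refine Finset.sum_le_sum fun s _ => (le_abs_self _).trans ?_
          rw [abs_mul]
          exact mul_le_mul_of_nonneg_right (hM s) (abs_nonneg _)
      _ = (⨆ s, |vt s|) * ∑ s, |g s| := by rw [Finset.mul_sum]
      _ ≤ (⨆ s, |vt s|) * ε := mul_le_mul_of_nonneg_left hgrad' hM0
      _ = ε * ⨆ s, |vt s| := mul_comm _ _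
  obtain ⟨s₀⟩ := ‹Nonempty S›
  obtain ⟨a₀⟩ := ‹Nonempty A›
  have hlogρ : Real.log ρ ≤ 0 := Real.log_nonpos hρ.le ((hdρ s₀).trans (hd1 s₀))
  have hlogβ : Real.log β ≤ 0 := Real.log_nonpos hβ.le <| (hq s₀ a₀).trans <|
    (Finset.single_le_sum (fun a _ => (hq0 s₀ a).le) (Finset.mem_univ a₀)).trans (hqs s₀)
  have hc : Real.log (1 / (ρ ^ 3 * β)) = -3 * Real.log ρ - Real.log β := by
    rw [one_div, Real.log_inv, Real.log_mul (pow_pos hρ 3).ne' hβ.ne', Real.log_pow]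
    push_cast
    ring
  set D := ∑ s, |d s - e s| with hD
  have hD0 : 0 ≤ D := Finset.sum_nonneg fun s _ => abs_nonneg _
  have hη' : 0 < 1 / η := one_div_pos.mpr hη
  have hent' := mul_le_mul_of_nonneg_left hent hη'.le
  have hmain : D + 1 / η * (D * (-Real.log ρ - Real.log β))
      ≤ ε * ((1 + (1 + Real.log (1 / (ρ ^ 3 * β))) / η) / (1 - γ)) := by
    have h1 : -Real.log ρ - Real.log β ≤ 1 + Real.log (1 / (ρ ^ 3 * β)) := by
      rw [hc]
      linarith
    have h2 : 0 ≤ 1 + Real.log (1 / (ρ ^ 3 * β)) := by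
      rw [hc]
      linarith
    calc D + 1 / η * (D * (-Real.log ρ - Real.log β))
        = D * (1 + (-Real.log ρ - Real.log β) / η) := by ring
      _ ≤ D * (1 + (1 + Real.log (1 / (ρ ^ 3 * β))) / η) := by gcongr
      _ ≤ ε / (1 - γ) * (1 + (1 + Real.log (1 / (ρ ^ 3 * β))) / η) :=
          mul_le_mul_of_nonneg_right hL1 (by positivity)
      _ = _ := by ring
  rw [hJP lt hsum] at hstar
  rw [hJP lam' hl1]
  have hstar' : JP r q η lamstar ≤ ∑ s, ∑ a, lt s a * r s a
      - (1 / η) * (∑ s, ∑ a, lt s a * Real.log (lt s a / q s a) - 1)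
      + ∑ s, vt s * g s := hstar
  rw [mul_add ε]
  linarith
end

section
/- In the Tsallis-REPS setting with order α > 1, suppose the minimal-visitation assumption holds with constant ρ > 0 and |S| ≥ 2. Let ṽ : S → ℝ and let λ̃ be a maximizer over the simplex Δ_{S×A} of λ ↦ Σ_{s,a} λ_{s,a} A^ṽ_{s,a} − F_T(λ), with λ̃_{s,a} > 0 for all (s,a). Suppose the constraint-residual vector g ∈ ℝ^S defined by g_s = (1−γ)μ_s + γ Σ_{s',a} P(s|s',a) λ̃_{s',a} − Σ_a λ̃_{s,a} satisfies Σ_s |g_s| ≤ ε. Define π̃(a|s) = λ̃_{s,a}/Σ_{a'} λ̃_{s,a'} and let λ' ∈ Λ be any feasible point with λ'_{s,a} = (Σ_{a'} λ'_{s,a'})·π̃(a|s) for all (s,a). Let λ*_η be a maximizer of J_P^T over Λ. Then J_P^T(λ') ≥ J_P^T(λ*_η) − ε·((1+c)/(1−γ) + max_s |ṽ_s|), where c = (1/(η(α−1)β^{α−1}))·(max(α−1, 2/ρ^{α−1}) + 2). -/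
/-- The Tsallis regularizer `F_T(λ) = (1/(η(α−1)))·(Σ_{s,a} λ_{s,a}^α / q_{s,a}^{α−1} − 1)`. -/
noncomputable def FT {S A : Type*} [Fintype S] [Fintype A] (q : S → A → ℝ) (η α : ℝ)
    (l : S → A → ℝ) : ℝ :=
  (1 / (η * (α - 1))) * (∑ s, ∑ a, l s a ^ α / q s a ^ (α - 1) - 1)

/-- The Tsallis-regularized primal objective `J_P^T(λ) = Σ λ_{s,a} r_{s,a} − F_T(λ)`. -/
noncomputable def JPT {S A : Type*} [Fintype S] [Fintype A] (r q : S → A → ℝ) (η α : ℝ)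
    (l : S → A → ℝ) : ℝ :=
  ∑ s, ∑ a, l s a * r s a - FT q η α l

/-- One-sided Lipschitz bound for `x ↦ x ^ α` on `[0, 1]`, from Bernoulli's inequality. -/
lemma rpow_sub_rpow_le {α x y : ℝ} (hα : 1 < α) (hx0 : 0 ≤ x) (hx1 : x ≤ 1) (hy0 : 0 ≤ y) :
    x ^ α - y ^ α ≤ α * |x - y| := by
  rcases le_or_gt x y with h | h
  · have h1 := Real.rpow_le_rpow hx0 h (by linarith : (0 : ℝ) ≤ α)
    have h2 : 0 ≤ α * |x - y| := by positivity
    linarith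
  · have hx : 0 < x := lt_of_le_of_lt hy0 h
    have hyx : 0 ≤ y / x := by positivity
    have hb := one_add_mul_self_le_rpow_one_add (s := y / x - 1) (by linarith) hα.le
    rw [show 1 + (y / x - 1) = y / x by ring, Real.div_rpow hy0 hx0] at hb
    have hxa : 0 < x ^ α := Real.rpow_pos_of_pos hx α
    rw [le_div_iff₀ hxa] at hb
    -- `x ^ α ≤ x` turns the Bernoulli slope `α x ^ α / x` into `α`.
    have hxle : x ^ α ≤ x := by
      simpa using Real.rpow_le_rpow_of_exponent_ge hx hx1 hα.le
    have hfac : 0 ≤ α * (1 - y / x) := by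
      have : y / x ≤ 1 := (div_le_one hx).2 h.le
      exact mul_nonneg (by linarith) (by linarith)
    have h3 := mul_le_mul_of_nonneg_left hxle hfac
    have h4 : α * (1 - y / x) * x = α * (x - y) := by field_simp
    rw [abs_of_pos (by linarith : 0 < x - y)]
    nlinarith

/-- The regularizer is Lipschitz in the state marginal when the policy `p` is held fixed. -/
lemma FT_sub_le {S A : Type*} [Fintype S] [Fintype A] {q p : S → A → ℝ} {η α β : ℝ}
    (hη : 0 < η) (hα : 1 < α) (hβ : 0 < β) (hq : ∀ s a, β ≤ q s a)
    (hp0 : ∀ s a, 0 ≤ p s a) (hp1 : ∀ s, ∑ a, p s a = 1) {d d' : S → ℝ}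
    (hd0 : ∀ s, 0 ≤ d s) (hd0' : ∀ s, 0 ≤ d' s) (hd1' : ∀ s, d' s ≤ 1) :
    FT q η α (fun s a => d' s * p s a) - FT q η α (fun s a => d s * p s a)
      ≤ (1 / (η * (α - 1) * β ^ (α - 1))) * (α * ∑ s, |d' s - d s|) := by
  have hple : ∀ s a, p s a ≤ 1 := fun s a => by
    rw [← hp1 s]
    exact Finset.single_le_sum (f := p s) (fun b _ => hp0 s b) (Finset.mem_univ a)
  have hβp : 0 < β ^ (α - 1) := Real.rpow_pos_of_pos hβ _
  have hterm : ∀ s a, (d' s * p s a) ^ α / q s a ^ (α - 1) - (d s * p s a) ^ α / q s a ^ (α - 1)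
      ≤ α * |d' s - d s| / β ^ (α - 1) * p s a := by
    intro s a
    have hpa : p s a ^ α ≤ p s a := by
      rcases (hp0 s a).eq_or_lt with h | h
      · rw [← h, Real.zero_rpow (by linarith)]
      · simpa using Real.rpow_le_rpow_of_exponent_ge h (hple s a) hα.le
    have hpa0 : 0 ≤ p s a ^ α := Real.rpow_nonneg (hp0 s a) _
    have hqp : β ^ (α - 1) ≤ q s a ^ (α - 1) :=
      Real.rpow_le_rpow hβ.le (hq s a) (by linarith)
    have hr := rpow_sub_rpow_le hα (hd0' s) (hd1' s) (hd0 s)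
    have hnn : 0 ≤ α * |d' s - d s| := mul_nonneg (by linarith) (abs_nonneg _)
    rw [Real.mul_rpow (hd0' s) (hp0 s a), Real.mul_rpow (hd0 s) (hp0 s a), ← sub_div, ← sub_mul,
      div_mul_eq_mul_div]
    apply div_le_div₀ (mul_nonneg hnn (hp0 s a)) _ hβp hqp
    exact (mul_le_mul_of_nonneg_right hr hpa0).trans (mul_le_mul_of_nonneg_left hpa hnn)
  have hsum : ∑ s, ∑ a, (d' s * p s a) ^ α / q s a ^ (α - 1)
      - ∑ s, ∑ a, (d s * p s a) ^ α / q s a ^ (α - 1)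
      ≤ (α * ∑ s, |d' s - d s|) / β ^ (α - 1) := by
    rw [← Finset.sum_sub_distrib, Finset.mul_sum, Finset.sum_div]
    refine Finset.sum_le_sum fun s _ => ?_
    rw [← Finset.sum_sub_distrib]
    refine (Finset.sum_le_sum fun a _ => hterm s a).trans ?_
    rw [← Finset.mul_sum, hp1, mul_one]
  have hc : 0 ≤ 1 / (η * (α - 1)) := by
    have : 0 < α - 1 := by linarith
    positivity
  have := mul_le_mul_of_nonneg_left hsum hc
  unfold FT
  calc _ = 1 / (η * (α - 1)) * (∑ s, ∑ a, (d' s * p s a) ^ α / q s a ^ (α - 1)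
      - ∑ s, ∑ a, (d s * p s a) ^ α / q s a ^ (α - 1)) := by ring
    _ ≤ _ := this
    _ = _ := by
      rw [one_div, one_div, mul_inv (η * (α - 1))]
      ring

/-- Summation by parts: the Lagrangian's linear part in terms of rewards and flow residuals. -/
lemma sum_mul_adv {S A : Type*} [Fintype S] [Fintype A] (P : S → A → S → ℝ) (r : S → A → ℝ)
    (γ : ℝ) (μ v : S → ℝ) (l : S → A → ℝ) :
    ∑ s, ∑ a, l s a * Adv P r γ v s a = ∑ s, ∑ a, l s a * r s a
      + ∑ s, v s * ((1 - γ) * μ s + γ * (∑ s', ∑ a, P s' a s * l s' a) - ∑ a, l s a)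
      - (1 - γ) * ∑ s, μ s * v s := by
  have hswap : ∑ s, ∑ a, l s a * (γ * ∑ s', P s a s' * v s')
      = ∑ s, v s * (γ * ∑ s', ∑ a, P s' a s * l s' a) := by
    simp only [Finset.mul_sum]
    conv_rhs => rw [Finset.sum_comm]
    refine Finset.sum_congr rfl fun s _ => ?_
    conv_rhs => rw [Finset.sum_comm]
    refine Finset.sum_congr rfl fun a _ => Finset.sum_congr rfl fun s' _ => ?_
    ring
  have h1 : ∀ s a, l s a * Adv P r γ v s a
      = l s a * r s a - v s * l s a + l s a * (γ * ∑ s', P s a s' * v s') := by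
    intro s a
    unfold Adv
    ring
  simp only [h1, Finset.sum_add_distrib, Finset.sum_sub_distrib, hswap]
  simp only [mul_add, mul_sub, Finset.sum_add_distrib, Finset.sum_sub_distrib, ← Finset.mul_sum]
  have h2 : ∑ s, v s * ((1 - γ) * μ s) = (1 - γ) * ∑ s, μ s * v s := by
    rw [Finset.mul_sum]
    exact Finset.sum_congr rfl fun s _ => by ring
  simp only [mul_sub, sub_mul, one_mul, Finset.sum_sub_distrib] at h2 ⊢
  linarith

/-- Two marginals with a common policy `p`, one satisfying the flow equation exactly and the other
up to the residual `g`, are within `‖g‖₁ / (1 - γ)` of each other, as `P_pᵀ` contracts `ℓ¹`. -/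
lemma l1_marginal_bound {S A : Type*} [Fintype S] [Fintype A] {P : S → A → S → ℝ}
    (hP0 : ∀ s a s', 0 ≤ P s a s') (hP1 : ∀ s a, ∑ s', P s a s' = 1) {γ : ℝ} (hγ0 : 0 ≤ γ)
    {p : S → A → ℝ} (hp0 : ∀ s a, 0 ≤ p s a) (hp1 : ∀ s, ∑ a, p s a = 1) {d d' b g : S → ℝ}
    (hd' : ∀ s, d' s = b s + γ * ∑ s', ∑ a, P s' a s * (d' s' * p s' a))
    (hd : ∀ s, d s = b s + γ * ∑ s', ∑ a, P s' a s * (d s' * p s' a) - g s) :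
    (1 - γ) * ∑ s, |d' s - d s| ≤ ∑ s, |g s| := by
  have hs : ∀ s, |d' s - d s| ≤ γ * ∑ s', ∑ a, P s' a s * (|d' s' - d s'| * p s' a) + |g s| := by
    intro s
    have he : d' s - d s = γ * ∑ s', ∑ a, P s' a s * ((d' s' - d s') * p s' a) + g s := by
      rw [hd' s, hd s]
      simp only [sub_mul, mul_sub, Finset.sum_sub_distrib]
      ring
    rw [he]
    refine (abs_add_le _ _).trans (add_le_add ?_ le_rfl)
    rw [abs_mul, abs_of_nonneg hγ0]
    refine mul_le_mul_of_nonneg_left ?_ hγ0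
    refine (Finset.abs_sum_le_sum_abs _ _).trans (Finset.sum_le_sum fun s' _ => ?_)
    refine (Finset.abs_sum_le_sum_abs _ _).trans (Finset.sum_le_sum fun a _ => ?_)
    rw [abs_mul, abs_mul, abs_of_nonneg (hP0 s' a s), abs_of_nonneg (hp0 s' a)]
  have htot : ∑ s, ∑ s', ∑ a, P s' a s * (|d' s' - d s'| * p s' a) = ∑ s, |d' s - d s| := by
    rw [Finset.sum_comm]
    refine Finset.sum_congr rfl fun s' _ => ?_
    rw [Finset.sum_comm]
    simp only [← Finset.sum_mul, hP1, one_mul]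
    rw [← Finset.mul_sum, hp1, mul_one]
  have h := Finset.sum_le_sum fun s (_ : s ∈ Finset.univ) => hs s
  rw [Finset.sum_add_distrib, ← Finset.mul_sum, htot] at h
  linarith


/-- Tsallis analogue of the REPS structural lemma: a dual candidate `ṽ`
whose primal candidate `λ̃` has small constraint residual (in ℓ1 norm) yields a policy
whose induced feasible visitation distribution nearly maximizes `J_P^T`. -/
theorem stmt_16 {S A : Type*} [Fintype S] [Fintype A] [Nonempty S] [Nonempty A]
    (P : S → A → S → ℝ) (hP0 : ∀ s a s', 0 ≤ P s a s') (hP1 : ∀ s a, ∑ s', P s a s' = 1)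
    (r : S → A → ℝ) (hr : ∀ s a, 0 ≤ r s a ∧ r s a ≤ 1)
    (μ : S → ℝ) (hμ0 : ∀ s, 0 ≤ μ s) (hμ1 : ∑ s, μ s = 1)
    (γ : ℝ) (hγ : 0 < γ ∧ γ < 1)
    (β : ℝ) (hβ : 0 < β)
    (q : S → A → ℝ) (hq : ∀ s a, β ≤ q s a) (hq1 : ∑ s, ∑ a, q s a = 1)
    (η : ℝ) (hη : 0 < η) (α : ℝ) (hα : 1 < α)
    (ρ : ℝ) (hρ : 0 < ρ)
    (hvisit : ∀ l ∈ Feasible P μ γ, ∀ s, ρ ≤ ∑ a, l s a)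
    (hS : 2 ≤ Fintype.card S)
    (vt : S → ℝ)
    (lamt : S → A → ℝ)
    (hlamt_pos : ∀ s a, 0 < lamt s a) (hlamt_sum : ∑ s, ∑ a, lamt s a = 1)
    (hlamt_max : ∀ l : S → A → ℝ, (∀ s a, 0 ≤ l s a) → ∑ s, ∑ a, l s a = 1 →
      ∑ s, ∑ a, l s a * Adv P r γ vt s a - FT q η α l
        ≤ ∑ s, ∑ a, lamt s a * Adv P r γ vt s a - FT q η α lamt)
    (ε : ℝ)
    (hres : ∑ s, |(1 - γ) * μ s + γ * (∑ s', ∑ a, P s' a s * lamt s' a)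
      - ∑ a, lamt s a| ≤ ε)
    (lam' : S → A → ℝ) (hlam'_mem : lam' ∈ Feasible P μ γ)
    (hlam'_pol : ∀ s a, lam' s a = (∑ a', lam' s a') * (lamt s a / ∑ a', lamt s a'))
    (lamstar : S → A → ℝ) (hstar_mem : lamstar ∈ Feasible P μ γ)
    (hstar_max : ∀ l ∈ Feasible P μ γ, JPT r q η α l ≤ JPT r q η α lamstar) :
    JPT r q η α lamstar - ε *
        ((1 + (1 / (η * (α - 1) * β ^ (α - 1))) * (max (α - 1) (2 / ρ ^ (α - 1)) + 2))
          / (1 - γ) + ⨆ s, |vt s|)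
      ≤ JPT r q η α lam' := by
  obtain ⟨hγ0, hγ1⟩ := hγ
  set d : S → ℝ := fun s => ∑ a, lamt s a with hd
  set d' : S → ℝ := fun s => ∑ a, lam' s a with hd'
  set p : S → A → ℝ := fun s a => lamt s a / d s with hp
  set g : S → ℝ := fun s => (1 - γ) * μ s + γ * (∑ s', ∑ a, P s' a s * lamt s' a)
    - ∑ a, lamt s a with hg
  have hdpos : ∀ s, 0 < d s := fun s =>
    Finset.sum_pos (fun a _ => hlamt_pos s a) Finset.univ_nonempty
  have hp0 : ∀ s a, 0 ≤ p s a := fun s a => div_nonneg (hlamt_pos s a).le (hdpos s).le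
  have hp1 : ∀ s, ∑ a, p s a = 1 := fun s => by
    simp only [hp, ← Finset.sum_div]
    exact div_self (hdpos s).ne'
  have hlt : lamt = fun s a => d s * p s a := by
    funext s a
    simp only [hp]
    rw [mul_div_cancel₀ _ (hdpos s).ne']
  have hl' : lam' = fun s a => d' s * p s a := by
    funext s a
    exact hlam'_pol s a
  have hd0' : ∀ s, 0 ≤ d' s := fun s => Finset.sum_nonneg fun a _ => hlam'_mem.1 s a
  have hd1' : ∀ s, d' s ≤ 1 := fun s => by
    rw [← hlam'_mem.2.1]
    exact Finset.single_le_sum (f := d') (fun b _ => hd0' b) (Finset.mem_univ s)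
  have hl'e : ∀ s a, lam' s a = d' s * p s a := fun s a => congrFun (congrFun hl' s) a
  have hlte : ∀ s a, lamt s a = d s * p s a := fun s a => congrFun (congrFun hlt s) a
  set D : ℝ := ∑ s, |d' s - d s| with hD
  have hD0 : 0 ≤ D := Finset.sum_nonneg fun s _ => abs_nonneg _
  have hDε : D ≤ ε / (1 - γ) := by
    have h := l1_marginal_bound (d := d) (d' := d') (g := g) (b := fun s => (1 - γ) * μ s)
      hP0 hP1 hγ0.le hp0 hp1
      (fun s => by
        simp only [← hl'e]
        exact hlam'_mem.2.2 s)
      (fun s => by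
        simp only [← hlte, hg]
        change d s = _ - (_ + _ - d s)
        ring)
    rw [le_div_iff₀ (by linarith)]
    linarith
  have hFT : FT q η α lam' - FT q η α lamt
      ≤ (1 / (η * (α - 1) * β ^ (α - 1))) * (α * D) := by
    rw [hl', hlt]
    exact FT_sub_le hη hα hβ hq hp0 hp1 (fun s => (hdpos s).le) hd0' hd1'
  have hrew : ∑ s, ∑ a, lamt s a * r s a - ∑ s, ∑ a, lam' s a * r s a ≤ D := by
    rw [← Finset.sum_sub_distrib, hD]
    refine Finset.sum_le_sum fun s _ => ?_
    rw [← Finset.sum_sub_distrib]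
    calc ∑ a, (lamt s a * r s a - lam' s a * r s a)
        ≤ ∑ a, |d' s - d s| * p s a := by
          refine Finset.sum_le_sum fun a _ => ?_
          rw [hlte, hl'e, show d s * p s a * r s a - d' s * p s a * r s a
            = (d s - d' s) * (p s a * r s a) by ring]
          have h1 : p s a * r s a ≤ p s a := mul_le_of_le_one_right (hp0 s a) (hr s a).2
          have h2 : d s - d' s ≤ |d' s - d s| := by
            rw [abs_sub_comm]
            exact le_abs_self _
          exact (mul_le_mul_of_nonneg_right h2 (mul_nonneg (hp0 s a) (hr s a).1)).trans
            (mul_le_mul_of_nonneg_left h1 (abs_nonneg _))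
      _ = |d' s - d s| := by rw [← Finset.mul_sum, hp1, mul_one]
  have hvg : ∑ s, vt s * g s ≤ ε * ⨆ s, |vt s| := by
    have hM : ∀ s, |vt s| ≤ ⨆ s, |vt s| := fun s =>
      le_ciSup (f := fun s => |vt s|) (Set.finite_range _).bddAbove s
    have hM0 : 0 ≤ ⨆ s, |vt s| := Real.iSup_nonneg fun s => abs_nonneg _
    calc ∑ s, vt s * g s ≤ ∑ s, |g s| * ⨆ s, |vt s| := by
          refine Finset.sum_le_sum fun s _ => (le_abs_self _).trans ?_
          rw [abs_mul, mul_comm]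
          exact mul_le_mul_of_nonneg_left (hM s) (abs_nonneg _)
      _ = (∑ s, |g s|) * ⨆ s, |vt s| := by rw [Finset.sum_mul]
      _ ≤ _ := mul_le_mul_of_nonneg_right hres hM0
  have hstar : JPT r q η α lamstar ≤ JPT r q η α lamt + ∑ s, vt s * g s := by
    have h := hlamt_max lamstar hstar_mem.1 hstar_mem.2.1
    rw [sum_mul_adv P r γ μ vt lamstar, sum_mul_adv P r γ μ vt lamt] at h
    -- The flow residual of the feasible point `lamstar` vanishes.
    have h0 : ∑ s, vt s * ((1 - γ) * μ s + γ * (∑ s', ∑ a, P s' a s * lamstar s' a)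
        - ∑ a, lamstar s a) = 0 :=
      Finset.sum_eq_zero fun s _ => by rw [hstar_mem.2.2 s, sub_self, mul_zero]
    rw [h0] at h
    unfold JPT
    linarith
  set K : ℝ := 1 / (η * (α - 1) * β ^ (α - 1)) with hK
  have hK0 : 0 ≤ K := by
    have h1 : 0 < α - 1 := by linarith
    positivity
  set m : ℝ := max (α - 1) (2 / ρ ^ (α - 1)) + 2 with hm
  have hαm : α ≤ m := by
    have := le_max_left (α - 1) (2 / ρ ^ (α - 1))
    linarith
  have hKm : K * (α * D) ≤ K * m * D := by
    rw [mul_assoc]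
    exact mul_le_mul_of_nonneg_left (mul_le_mul_of_nonneg_right hαm hD0) hK0
  have hKm0 : 0 ≤ 1 + K * m := by
    have : 0 ≤ K * m := mul_nonneg hK0 (by linarith)
    linarith
  have hfin : (1 + K * m) * D ≤ ε * ((1 + K * m) / (1 - γ)) := by
    calc _ ≤ (1 + K * m) * (ε / (1 - γ)) := mul_le_mul_of_nonneg_left hDε hKm0
      _ = _ := by ring
  have hJ : JPT r q η α lamt - JPT r q η α lam' ≤ (1 + K * m) * D := by
    unfold JPT
    linarith
  rw [mul_add]
  linarith
end
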